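/- arXiv:1908.04543 — 2 statements merged into one kernel-verified Lean document; each statement's English description precedes it below -/
import Mathlib

section
/- For every α ∈ (0,1) and every x ≥ 0, the integral ∫₀^∞ F_α(t)/((1+t)(1+t+x)) dt converges absolutely and equals 1/(α(1−α)(1+x)) − (π/sin(πα)) · F_α(x)/(1+x). -/
open MeasureTheory Real Set

/-- The Gauss hypergeometric function `₂F₁(α, 1-α; 2; -x)` via its Euler integral. -/
noncomputable def Fhyp (α x : ℝ) : ℝ :=
  (1 / (Real.Gamma (1 - α) * Real.Gamma (1 + α))) *
    ∫ u in (0:ℝ)..1, u ^ (-α) * (1 - u) ^ α * (1 + x * u) ^ (-α)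

/-!
Write `φ w = (w (1 + w)) ^ (-α)`. Up to a constant, `F_α t / (1 + t)` is the Stieltjes transform
`E t = ∫₀^∞ φ w (1 + t + w) ^ (α - 2) dw`. Integrating by parts,
`∫₀^∞ E t / (1 + x + t) dt = (∫₀^∞ E) / (1 + x) - ∫₀^∞ (∫ₛ^∞ E) (1 + x + s) ^ (-2) ds`.
The tail `∫ₛ^∞ E` is a multiple of `∫₀^∞ φ w (1 + s + w) ^ (α - 1) dw`, which, by the special form
of `φ`, is also the fractional integral `∫₀ˢ φ y (s - y) ^ (α - 1) dy`. The Stieltjes transform of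
order `2` of that fractional integral is again a multiple of `E x`, by a beta integral.
-/

open ProbabilityTheory (beta beta_pos)
open scoped ENNReal

section LebesgueIntegral

lemma image_div_const_add_Ioi {a : ℝ} (ha : 0 < a) :
    (fun w : ℝ => w / (a + w)) '' Ioi 0 = Ioo 0 1 := by
  ext u
  simp only [mem_image, mem_Ioi, mem_Ioo]
  constructor
  · rintro ⟨w, hw, rfl⟩
    have haw : 0 < a + w := by positivity
    exact ⟨by positivity, (div_lt_one haw).2 (by linarith)⟩
  · rintro ⟨hu₀, hu₁⟩
    have : 0 < 1 - u := sub_pos.2 hu₁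
    refine ⟨a * u / (1 - u), by positivity, ?_⟩
    have hsum : a + a * u / (1 - u) = a / (1 - u) := by field_simp; ring
    rw [hsum]
    field_simp

lemma injOn_div_const_add_Ioi {a : ℝ} (ha : 0 < a) :
    InjOn (fun w : ℝ => w / (a + w)) (Ioi 0) := by
  intro w (hw : 0 < w) v (hv : 0 < v) h
  have hcross : w * (a + v) = v * (a + w) := (div_eq_div_iff (by positivity) (by positivity)).1 h
  exact mul_left_cancel₀ ha.ne' (by linarith)

lemma lintegral_Ioo_zero_one_eq_lintegral_Ioi_div_add {a : ℝ} (ha : 0 < a) (g : ℝ → ℝ≥0∞) :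
    ∫⁻ u in Ioo 0 1, g u =
      ∫⁻ w in Ioi 0, ENNReal.ofReal (a / (a + w) ^ 2) * g (w / (a + w)) := by
  have hderiv : ∀ w ∈ Ioi (0 : ℝ),
      HasDerivWithinAt (fun w => w / (a + w)) (a / (a + w) ^ 2) (Ioi 0) w := by
    intro w (hw : 0 < w)
    have h := (hasDerivAt_id' w).div ((hasDerivAt_id' w).const_add a) (by positivity)
    exact (h.congr_deriv (by ring)).hasDerivWithinAt
  rw [← image_div_const_add_Ioi ha, lintegral_image_eq_lintegral_abs_deriv_mul measurableSet_Ioi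
    hderiv (injOn_div_const_add_Ioi ha)]
  refine setLIntegral_congr_fun measurableSet_Ioi fun w (hw : 0 < w) => ?_
  rw [abs_of_pos (by positivity)]

lemma lintegral_Ioo_zero_eq_lintegral_comp_mul {b : ℝ} (hb : 0 < b) (g : ℝ → ℝ≥0∞) :
    ∫⁻ y in Ioo 0 b, g y = ∫⁻ u in Ioo 0 1, ENNReal.ofReal b * g (b * u) := by
  have himage : (b * ·) '' Ioo 0 1 = Ioo 0 b := by
    rw [image_mul_left_Ioo hb, mul_zero, mul_one]
  rw [← himage, lintegral_image_eq_lintegral_abs_deriv_mul measurableSet_Ioo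
    (fun u _ => (hasDerivAt_const_mul b).hasDerivWithinAt)
    (mul_right_injective₀ hb.ne').injOn, abs_of_pos hb]

lemma lintegral_Ioi_comp_add_right (s m : ℝ) (g : ℝ → ℝ≥0∞) :
    ∫⁻ t in Ioi s, g (t + m) = ∫⁻ t in Ioi (s + m), g t := by
  simpa using (measurePreserving_add_right volume m).setLIntegral_comp_preimage_emb
    (measurableEmbedding_addRight m) g (Ioi (s + m))

lemma lintegral_lintegral_Ioo_eq_lintegral_lintegral_Ioi {f : ℝ → ℝ → ℝ≥0∞}
    (hf : Measurable (Function.uncurry f)) :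
    ∫⁻ t in Ioi (0 : ℝ), ∫⁻ s in Ioo 0 t, f t s = ∫⁻ s in Ioi (0 : ℝ), ∫⁻ t in Ioi s, f t s := by
  let below : Set (ℝ × ℝ) := {q | q.2 < q.1}
  have hIoo : ∀ t : ℝ, ∫⁻ s in Ioo 0 t, f t s =
      ∫⁻ s in Ioi 0, below.indicator (Function.uncurry f) (t, s) := by
    intro t
    rw [← Ioi_inter_Iio, inter_comm, ← setLIntegral_indicator measurableSet_Iio]
    rfl
  have hIoi : ∀ s ∈ Ioi (0 : ℝ), ∫⁻ t in Ioi s, f t s =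
      ∫⁻ t in Ioi 0, below.indicator (Function.uncurry f) (t, s) := by
    intro s hs
    rw [← inter_eq_left.2 (Ioi_subset_Ioi (mem_Ioi.1 hs).le),
      ← setLIntegral_indicator measurableSet_Ioi]
    rfl
  simp_rw [setLIntegral_congr_fun measurableSet_Ioi hIoi, hIoo]
  exact lintegral_lintegral_swap
    (hf.indicator (measurableSet_lt measurable_snd measurable_fst)).aemeasurable

end LebesgueIntegral

section PowerIntegrals

lemma lintegral_Ioi_const_add_rpow {p m s : ℝ} (hp : 0 < p) (hms : 0 < m + s) :
    ∫⁻ t in Ioi s, ENNReal.ofReal ((m + t) ^ (-(p + 1))) =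
      ENNReal.ofReal (1 / p * (m + s) ^ (-p)) := by
  have hexp : -(p + 1) < -1 := by linarith
  simp_rw [add_comm m] at hms ⊢
  rw [lintegral_Ioi_comp_add_right s m fun t => ENNReal.ofReal (t ^ (-(p + 1))),
    ← ofReal_integral_eq_lintegral_ofReal (integrableOn_Ioi_rpow_of_lt hexp hms)
      (ae_restrict_of_forall_mem measurableSet_Ioi fun t ht => rpow_nonneg (hms.trans ht).le _),
    integral_Ioi_rpow_of_lt hexp hms, neg_add, neg_add_cancel_right]
  congr 1
  field_simp

lemma lintegral_Ioo_const_add_rpow_add {p a t : ℝ} (hp : 0 < p) (ha : 0 < a) (ht : 0 < t) :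
    (∫⁻ s in Ioo 0 t, ENNReal.ofReal ((a + s) ^ (-(p + 1)))) +
      ENNReal.ofReal (1 / p * (a + t) ^ (-p)) = ENNReal.ofReal (1 / p * a ^ (-p)) := by
  have hdisj : Disjoint (Ico 0 t) (Ici t) :=
    (Iio_disjoint_Ici le_rfl).mono_left Ico_subset_Iio_self
  have hsplit := lintegral_union (μ := volume) (f := fun s => ENNReal.ofReal ((a + s) ^ (-(p + 1))))
    measurableSet_Ici hdisj
  rw [Ico_union_Ici_eq_Ici ht.le, setLIntegral_congr Ioi_ae_eq_Ici.symm,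
    setLIntegral_congr Ioi_ae_eq_Ici.symm, setLIntegral_congr Ioo_ae_eq_Ico.symm,
    lintegral_Ioi_const_add_rpow hp (by positivity),
    lintegral_Ioi_const_add_rpow hp (by positivity), add_zero] at hsplit
  exact hsplit.symm

lemma lintegral_Ioo_rpow_mul_one_sub_rpow {p q : ℝ} (hp : 0 < p) (hq : 0 < q) :
    ∫⁻ u in Ioo (0 : ℝ) 1, ENNReal.ofReal (u ^ (p - 1) * (1 - u) ^ (q - 1)) =
      ENNReal.ofReal (beta p q) := by
  have hbeta := beta_pos hp hq
  have hpdf := ProbabilityTheory.lintegral_betaPDF_eq_one hp hq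
  simp_rw [ProbabilityTheory.lintegral_betaPDF, mul_assoc,
    ENNReal.ofReal_mul (one_div_pos.2 hbeta).le] at hpdf
  rw [lintegral_const_mul _ (by fun_prop), one_div, ENNReal.ofReal_inv_of_pos hbeta] at hpdf
  rw [ENNReal.eq_inv_of_mul_eq_one_left ((mul_comm _ _).trans hpdf), inv_inv]

lemma lintegral_euler_kernel_eq_lintegral_Ioi (a b c : ℝ) {t : ℝ} (ht : -1 < t) :
    ∫⁻ u in Ioo (0 : ℝ) 1,
        ENNReal.ofReal (u ^ (b - 1) * (1 - u) ^ (c - b - 1) * (1 + t * u) ^ (-a)) =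
      ENNReal.ofReal ((1 + t) ^ (c - a - b)) *
        ∫⁻ w in Ioi (0 : ℝ),
          ENNReal.ofReal (w ^ (b - 1) * (1 + w) ^ (-a) * (1 + t + w) ^ (a - c)) := by
  have ht₁ : 0 < 1 + t := by linarith
  rw [lintegral_Ioo_zero_one_eq_lintegral_Ioi_div_add ht₁, ← lintegral_const_mul _ (by fun_prop)]
  refine setLIntegral_congr_fun measurableSet_Ioi fun w (hw : 0 < w) => ?_
  have hsub : 1 - w / (1 + t + w) = (1 + t) / (1 + t + w) := by field_simp; ring
  have hadd : 1 + t * (w / (1 + t + w)) = (1 + t) * (1 + w) / (1 + t + w) := by field_simp; ring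
  simp only [hsub, hadd]
  rw [← ENNReal.ofReal_mul (by positivity), ← ENNReal.ofReal_mul (by positivity)]
  congr 1
  -- Both sides are products of real powers, so it suffices to compare their logarithms.
  refine log_injOn_pos (mem_Ioi.2 (by positivity)) (mem_Ioi.2 (by positivity)) ?_
  simp (disch := positivity) only [log_mul, log_div, log_rpow, log_pow]
  push_cast
  ring

lemma lintegral_Ioi_rpow_mul_const_add_rpow {p q a : ℝ} (hp : 0 < p) (hq : 0 < q) (ha : 0 < a) :
    ∫⁻ r in Ioi (0 : ℝ), ENNReal.ofReal (r ^ (p - 1) * (a + r) ^ (-(p + q))) =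
      ENNReal.ofReal (beta p q * a ^ (-q)) := by
  have heuler := lintegral_euler_kernel_eq_lintegral_Ioi 0 p (p + q) (t := a - 1) (by linarith)
  simp only [neg_zero, rpow_zero, mul_one, zero_sub, sub_zero, add_sub_cancel_left,
    add_sub_cancel, lintegral_Ioo_rpow_mul_one_sub_rpow hp hq] at heuler
  rw [mul_comm, ENNReal.ofReal_mul (by positivity), heuler, ← mul_assoc,
    ← ENNReal.ofReal_mul (by positivity), ← rpow_add ha, neg_add_cancel, rpow_zero,
    ENNReal.ofReal_one, one_mul]

lemma beta_one_sub_self (α : ℝ) : beta (1 - α) α = π / sin (π * α) := by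
  rw [beta, sub_add_cancel, Gamma_one, div_one, mul_comm, Gamma_mul_Gamma_one_sub]

lemma Gamma_one_sub_mul_Gamma_one_add {α : ℝ} (hα : α ≠ 0) :
    Gamma (1 - α) * Gamma (1 + α) = α * (π / sin (π * α)) := by
  rw [add_comm, Gamma_add_one hα, ← Gamma_mul_Gamma_one_sub]
  ring

lemma pi_div_sin_pi_mul_pos {α : ℝ} (hα₀ : 0 < α) (hα₁ : α < 1) : 0 < π / sin (π * α) :=
  beta_one_sub_self α ▸ beta_pos (sub_pos.2 hα₁) hα₀

lemma beta_two_sub {α : ℝ} (hα : α ≠ 1) : beta α (2 - α) = (1 - α) * (π / sin (π * α)) := by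
  have hGamma : Gamma (2 - α) = (1 - α) * Gamma (1 - α) := by
    rw [← Gamma_add_one (sub_ne_zero.2 hα.symm)]
    ring_nf
  rw [beta, add_sub_cancel, Gamma_two, div_one, hGamma, ← Gamma_mul_Gamma_one_sub]
  ring

end PowerIntegrals

section Stieltjes

/-- The generalized Stieltjes transform of order `p` of a function `φ` on the half-line. It takes
values in `ℝ≥0∞`, so that Tonelli's theorem applies without integrability conditions. -/
noncomputable def genStieltjes (φ : ℝ → ℝ≥0∞) (p z : ℝ) : ℝ≥0∞ :=
  ∫⁻ w in Ioi 0, φ w * ENNReal.ofReal ((z + w) ^ (-p))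

/-- The Riemann–Liouville fractional integral of order `p` of a function `φ` on the half-line,
without the customary factor `1 / Γ(p)`. -/
noncomputable def fracIntegral (φ : ℝ → ℝ≥0∞) (p s : ℝ) : ℝ≥0∞ :=
  ∫⁻ y in Ioo 0 s, φ y * ENNReal.ofReal ((s - y) ^ (p - 1))

variable {φ ψ : ℝ → ℝ≥0∞} {p q : ℝ}

lemma genStieltjes_congr (h : EqOn φ ψ (Ioi 0)) (p z : ℝ) :
    genStieltjes φ p z = genStieltjes ψ p z :=
  setLIntegral_congr_fun measurableSet_Ioi fun w hw => by rw [h hw]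

lemma genStieltjes_const_mul {c : ℝ≥0∞} (hc : c ≠ ∞) (φ : ℝ → ℝ≥0∞) (p z : ℝ) :
    genStieltjes (fun w => c * φ w) p z = c * genStieltjes φ p z := by
  simp only [genStieltjes, mul_assoc, lintegral_const_mul' _ _ hc]

lemma measurable_genStieltjes (hφ : Measurable φ) (p : ℝ) : Measurable (genStieltjes φ p) :=
  Measurable.lintegral_prod_right'
    (f := fun zw : ℝ × ℝ => φ zw.2 * ENNReal.ofReal ((zw.1 + zw.2) ^ (-p))) (by fun_prop)

lemma lintegral_Ioi_genStieltjes (hφ : Measurable φ) (hp : 0 < p) {c s : ℝ} (hcs : 0 ≤ c + s) :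
    ∫⁻ t in Ioi s, genStieltjes φ (p + 1) (c + t) =
      ENNReal.ofReal (1 / p) * genStieltjes φ p (c + s) := by
  simp_rw [genStieltjes]
  rw [lintegral_lintegral_swap (by fun_prop), ← lintegral_const_mul _ (by fun_prop)]
  refine setLIntegral_congr_fun measurableSet_Ioi fun w (hw : 0 < w) => ?_
  simp_rw [add_right_comm c _ w]
  rw [lintegral_const_mul _ (by fun_prop), lintegral_Ioi_const_add_rpow hp (by linarith),
    ENNReal.ofReal_mul (by positivity), mul_left_comm]

lemma genStieltjes_lintegral_Ioi (hφ : Measurable φ) (hp : 0 < p) {a : ℝ} (ha : 0 < a) :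
    genStieltjes (fun s => ∫⁻ t in Ioi s, φ t) (p + 1) a +
        ENNReal.ofReal (1 / p) * genStieltjes φ p a =
      (∫⁻ t in Ioi 0, φ t) * ENNReal.ofReal (1 / p * a ^ (-p)) := by
  have hswap : genStieltjes (fun s => ∫⁻ t in Ioi s, φ t) (p + 1) a =
      ∫⁻ t in Ioi 0, φ t * ∫⁻ s in Ioo 0 t, ENNReal.ofReal ((a + s) ^ (-(p + 1))) := by
    simp_rw [genStieltjes, ← lintegral_mul_const _ hφ]
    rw [← lintegral_lintegral_Ioo_eq_lintegral_lintegral_Ioi (by fun_prop)]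
    exact lintegral_congr fun t => lintegral_const_mul _ (by fun_prop)
  rw [hswap, genStieltjes, ← lintegral_const_mul _ (by fun_prop),
    ← lintegral_add_right _ (by fun_prop), ← lintegral_mul_const _ hφ]
  refine setLIntegral_congr_fun measurableSet_Ioi fun t (ht : 0 < t) => ?_
  rw [mul_left_comm, ← ENNReal.ofReal_mul (by positivity), ← mul_add,
    lintegral_Ioo_const_add_rpow_add hp ha ht]

lemma genStieltjes_fracIntegral (hφ : Measurable φ) (hp : 0 < p) (hq : 0 < q) {a : ℝ}
    (ha : 0 ≤ a) :
    genStieltjes (fracIntegral φ p) (p + q) a =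
      ENNReal.ofReal (beta p q) * genStieltjes φ q a := by
  simp_rw [genStieltjes, fracIntegral]
  simp_rw [← lintegral_mul_const' _ _ ENNReal.ofReal_ne_top]
  rw [lintegral_lintegral_Ioo_eq_lintegral_lintegral_Ioi (by fun_prop),
    ← lintegral_const_mul _ (by fun_prop)]
  refine setLIntegral_congr_fun measurableSet_Ioi fun y (hy : 0 < y) => ?_
  have hay : 0 < a + y := by positivity
  calc ∫⁻ s in Ioi y, φ y * ENNReal.ofReal ((s - y) ^ (p - 1)) *
          ENNReal.ofReal ((a + s) ^ (-(p + q)))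
      = ∫⁻ r in Ioi 0, φ y * ENNReal.ofReal ((r + y - y) ^ (p - 1)) *
          ENNReal.ofReal ((a + (r + y)) ^ (-(p + q))) := by
        rw [lintegral_Ioi_comp_add_right 0 y fun s => φ y * ENNReal.ofReal ((s - y) ^ (p - 1)) *
          ENNReal.ofReal ((a + s) ^ (-(p + q))), zero_add]
    _ = ∫⁻ r in Ioi 0, φ y * ENNReal.ofReal (r ^ (p - 1) * (a + y + r) ^ (-(p + q))) := by
        refine setLIntegral_congr_fun measurableSet_Ioi fun r (hr : 0 < r) => ?_
        rw [add_sub_cancel_right, mul_assoc, ← ENNReal.ofReal_mul (by positivity),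
          add_comm r y, ← add_assoc]
    _ = ENNReal.ofReal (beta p q) * (φ y * ENNReal.ofReal ((a + y) ^ (-q))) := by
        rw [lintegral_const_mul _ (by fun_prop), lintegral_Ioi_rpow_mul_const_add_rpow hp hq hay,
          ENNReal.ofReal_mul (beta_pos hp hq).le, mul_left_comm]

lemma integrableOn_toReal_mul_rpow_of_genStieltjes_ne_top (hφ : Measurable φ) {z : ℝ} (hz : 0 ≤ z)
    (h : genStieltjes φ p z ≠ ∞) :
    IntegrableOn (fun w => (φ w).toReal * (z + w) ^ (-p)) (Ioi 0) := by
  refine (integrable_toReal_of_lintegral_ne_top (by fun_prop) h).congr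
    (ae_restrict_of_forall_mem measurableSet_Ioi fun w (hw : 0 < w) => ?_)
  beta_reduce
  rw [ENNReal.toReal_mul, ENNReal.toReal_ofReal (by positivity)]

lemma setIntegral_toReal_mul_rpow (hφ : Measurable φ) {z : ℝ} (hz : 0 ≤ z)
    (h : genStieltjes φ p z ≠ ∞) :
    ∫ w in Ioi 0, (φ w).toReal * (z + w) ^ (-p) = (genStieltjes φ p z).toReal := by
  rw [genStieltjes, ← integral_toReal (by fun_prop) (ae_lt_top (by fun_prop) h)]
  refine setIntegral_congr_fun measurableSet_Ioi fun w (hw : 0 < w) => ?_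
  rw [ENNReal.toReal_mul, ENNReal.toReal_ofReal (by positivity)]

end Stieltjes

section EulerWeight

/-- The weight `(w (1 + w)) ^ (-α)` on the half-line, whose Stieltjes transform of order `2 - α`
represents `Fhyp α`. -/
noncomputable def eulerWeight (α w : ℝ) : ℝ≥0∞ :=
  ENNReal.ofReal (w ^ (-α) * (1 + w) ^ (-α))

variable {α t : ℝ}

lemma measurable_eulerWeight (α : ℝ) : Measurable (eulerWeight α) := by
  unfold eulerWeight
  fun_prop

lemma lintegral_euler_kernel_eq_genStieltjes (α c : ℝ) (ht : -1 < t) :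
    ∫⁻ u in Ioo (0 : ℝ) 1,
        ENNReal.ofReal (u ^ (-α) * (1 - u) ^ (c + α - 2) * (1 + t * u) ^ (-α)) =
      ENNReal.ofReal ((1 + t) ^ (c - 1)) * genStieltjes (eulerWeight α) (c - α) (1 + t) := by
  have heuler := lintegral_euler_kernel_eq_lintegral_Ioi α (1 - α) c ht
  rw [show 1 - α - 1 = -α by ring, show c - (1 - α) - 1 = c + α - 2 by ring,
    show c - α - (1 - α) = c - 1 by ring] at heuler
  rw [heuler, genStieltjes]
  congr 1
  refine setLIntegral_congr_fun measurableSet_Ioi fun w (hw : 0 < w) => ?_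
  rw [eulerWeight, ← ENNReal.ofReal_mul (by positivity), neg_sub]

lemma fracIntegral_eulerWeight (α : ℝ) {s : ℝ} (hs : 0 < s) :
    fracIntegral (eulerWeight α) α s = genStieltjes (eulerWeight α) (1 - α) (1 + s) := by
  have heuler := lintegral_euler_kernel_eq_genStieltjes α 1 (t := s) (by linarith)
  rw [sub_self, rpow_zero, ENNReal.ofReal_one, one_mul] at heuler
  rw [← heuler, fracIntegral, lintegral_Ioo_zero_eq_lintegral_comp_mul hs]
  refine setLIntegral_congr_fun measurableSet_Ioo fun u ⟨hu₀, hu₁⟩ => ?_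
  have hu : 0 < 1 - u := sub_pos.2 hu₁
  have hscale : s * (s ^ (-α) * s ^ (α - 1)) = 1 := by
    rw [← rpow_add hs, show -α + (α - 1) = -1 by ring, rpow_neg_one, mul_inv_cancel₀ hs.ne']
  rw [eulerWeight, ← ENNReal.ofReal_mul (by positivity), ← ENNReal.ofReal_mul hs.le,
    show s - s * u = s * (1 - u) by ring, mul_rpow hs.le hu₀.le, mul_rpow hs.le hu.le,
    show 1 + α - 2 = α - 1 by ring]
  congr 1
  linear_combination u ^ (-α) * (1 - u) ^ (α - 1) * (1 + s * u) ^ (-α) * hscale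

lemma genStieltjes_eulerWeight_one (hα₀ : 0 < α) (hα₁ : α < 1) :
    genStieltjes (eulerWeight α) (1 - α) 1 = ENNReal.ofReal (π / sin (π * α)) := by
  have heuler := lintegral_euler_kernel_eq_genStieltjes α 1 (t := 0) (by norm_num)
  simp only [zero_mul, add_zero, one_rpow, mul_one, ENNReal.ofReal_one, one_mul] at heuler
  rw [← heuler, ← beta_one_sub_self, ← lintegral_Ioo_rpow_mul_one_sub_rpow (sub_pos.2 hα₁) hα₀]
  ring_nf

end EulerWeight

section ScaledFhyp

/-- The function `F_α t / (1 + t)` up to a constant factor (see `Fhyp_eq_toReal_scaledFhyp`), as a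
Stieltjes transform. -/
noncomputable def scaledFhyp (α t : ℝ) : ℝ≥0∞ :=
  genStieltjes (eulerWeight α) (2 - α) (1 + t)

variable {α t x : ℝ}

lemma measurable_scaledFhyp (α : ℝ) : Measurable (scaledFhyp α) :=
  (measurable_genStieltjes (measurable_eulerWeight α) _).comp (measurable_const_add 1)

lemma Fhyp_eq_toReal_scaledFhyp (hα : α ≠ 0) (ht : -1 < t) :
    Fhyp α t = (1 + t) / (α * (π / sin (π * α))) * (scaledFhyp α t).toReal := by
  have ht₁ : 0 < 1 + t := by linarith
  have heuler := lintegral_euler_kernel_eq_genStieltjes α 2 ht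
  rw [add_sub_cancel_left, show (2 : ℝ) - 1 = 1 by norm_num, rpow_one, ← scaledFhyp] at heuler
  have hintegral : ∫ u in (0 : ℝ)..1, u ^ (-α) * (1 - u) ^ α * (1 + t * u) ^ (-α) =
      (1 + t) * (scaledFhyp α t).toReal := by
    rw [intervalIntegral.integral_of_le zero_le_one, integral_Ioc_eq_integral_Ioo,
      integral_eq_lintegral_of_nonneg_ae _ (Measurable.aestronglyMeasurable (by fun_prop)),
      heuler, ENNReal.toReal_mul, ENNReal.toReal_ofReal ht₁.le]
    refine ae_restrict_of_forall_mem measurableSet_Ioo fun u ⟨hu₀, hu₁⟩ => ?_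
    have : 0 < 1 - u := sub_pos.2 hu₁
    have htu : 0 < 1 + t * u := by nlinarith
    simp only [Pi.zero_apply]
    positivity
  rw [Fhyp, hintegral, Gamma_one_sub_mul_Gamma_one_add hα]
  ring

lemma lintegral_Ioi_scaledFhyp (hα : α < 1) {s : ℝ} (hs : -1 ≤ s) :
    ∫⁻ t in Ioi s, scaledFhyp α t =
      ENNReal.ofReal (1 / (1 - α)) * genStieltjes (eulerWeight α) (1 - α) (1 + s) := by
  rw [← lintegral_Ioi_genStieltjes (measurable_eulerWeight α) (sub_pos.2 hα) (by linarith),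
    show 1 - α + 1 = 2 - α by ring]
  rfl

lemma genStieltjes_lintegral_Ioi_scaledFhyp (hα₀ : 0 < α) (hα₁ : α < 1) (hx : -1 ≤ x) :
    genStieltjes (fun s => ∫⁻ t in Ioi s, scaledFhyp α t) 2 (1 + x) =
      ENNReal.ofReal (π / sin (π * α)) * scaledFhyp α x := by
  have hα : 0 < 1 - α := sub_pos.2 hα₁
  have htail : EqOn (fun s => ∫⁻ t in Ioi s, scaledFhyp α t)
      (fun s => ENNReal.ofReal (1 / (1 - α)) * fracIntegral (eulerWeight α) α s) (Ioi 0) := by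
    intro s (hs : 0 < s)
    simp only [lintegral_Ioi_scaledFhyp hα₁ (show -1 ≤ s by linarith),
      fracIntegral_eulerWeight α hs]
  calc genStieltjes (fun s => ∫⁻ t in Ioi s, scaledFhyp α t) 2 (1 + x)
      = ENNReal.ofReal (1 / (1 - α)) *
          genStieltjes (fracIntegral (eulerWeight α) α) (α + (2 - α)) (1 + x) := by
        rw [genStieltjes_congr htail, genStieltjes_const_mul ENNReal.ofReal_ne_top,
          add_sub_cancel]
    _ = ENNReal.ofReal (1 / (1 - α)) * (ENNReal.ofReal (beta α (2 - α)) * scaledFhyp α x) := by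
        rw [genStieltjes_fracIntegral (measurable_eulerWeight α) hα₀ (by linarith) (by linarith),
          scaledFhyp]
    _ = ENNReal.ofReal (π / sin (π * α)) * scaledFhyp α x := by
        rw [← mul_assoc, ← ENNReal.ofReal_mul (by positivity), beta_two_sub hα₁.ne, ← mul_assoc,
          one_div_mul_cancel hα.ne', one_mul]

lemma scaledFhyp_add_genStieltjes_scaledFhyp (hα₀ : 0 < α) (hα₁ : α < 1) (hx : -1 < x) :
    ENNReal.ofReal (π / sin (π * α)) * scaledFhyp α x + genStieltjes (scaledFhyp α) 1 (1 + x) =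
      ENNReal.ofReal (π / sin (π * α) / ((1 - α) * (1 + x))) := by
  have hα : 0 < 1 - α := sub_pos.2 hα₁
  have hx₁ : 0 < 1 + x := by linarith
  have hparts := genStieltjes_lintegral_Ioi (measurable_scaledFhyp α) one_pos hx₁
  rw [one_add_one_eq_two, genStieltjes_lintegral_Ioi_scaledFhyp hα₀ hα₁ hx.le,
    lintegral_Ioi_scaledFhyp hα₁ (by norm_num), add_zero, genStieltjes_eulerWeight_one hα₀ hα₁,
    one_div_one, ENNReal.ofReal_one, one_mul, one_mul, rpow_neg_one, mul_assoc,
    ← ENNReal.ofReal_mul' (by positivity), ← ENNReal.ofReal_mul (by positivity)] at hparts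
  rw [hparts]
  congr 1
  field_simp

lemma genStieltjes_scaledFhyp_ne_top (hα₀ : 0 < α) (hα₁ : α < 1) (hx : -1 < x) :
    genStieltjes (scaledFhyp α) 1 (1 + x) ≠ ∞ :=
  (ENNReal.add_ne_top.1
    (scaledFhyp_add_genStieltjes_scaledFhyp hα₀ hα₁ hx ▸ ENNReal.ofReal_ne_top)).2

lemma toReal_genStieltjes_scaledFhyp (hα₀ : 0 < α) (hα₁ : α < 1) (hx : -1 < x) :
    (genStieltjes (scaledFhyp α) 1 (1 + x)).toReal =
      π / sin (π * α) / ((1 - α) * (1 + x)) - π / sin (π * α) * (scaledFhyp α x).toReal := by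
  have hC := pi_div_sin_pi_mul_pos hα₀ hα₁
  have : 0 < 1 - α := sub_pos.2 hα₁
  have hx₁ : 0 < 1 + x := by linarith
  have hsum := scaledFhyp_add_genStieltjes_scaledFhyp hα₀ hα₁ hx
  obtain ⟨hfin, hfin'⟩ := ENNReal.add_ne_top.1 (hsum ▸ ENNReal.ofReal_ne_top)
  apply_fun ENNReal.toReal at hsum
  rw [ENNReal.toReal_add hfin hfin', ENNReal.toReal_mul, ENNReal.toReal_ofReal hC.le,
    ENNReal.toReal_ofReal (by positivity)] at hsum
  exact eq_sub_of_add_eq' hsum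

lemma Fhyp_div_mul_eq (hα : α ≠ 0) (ht : -1 < t) (x : ℝ) :
    Fhyp α t / ((1 + t) * (1 + t + x)) =
      (α * (π / sin (π * α)))⁻¹ * ((scaledFhyp α t).toReal * (1 + x + t) ^ (-1 : ℝ)) := by
  have ht₁ : 0 < 1 + t := by linarith
  rw [Fhyp_eq_toReal_scaledFhyp hα ht, rpow_neg_one, add_right_comm 1 x t]
  field_simp

end ScaledFhyp

theorem stieltjes_transform_general {α x : ℝ} (hα : α ∈ Ioo 0 1) (hx : -1 < x) :
    IntegrableOn (fun t => Fhyp α t / ((1 + t) * (1 + t + x))) (Ioi 0) ∧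
    ∫ t in Ioi 0, Fhyp α t / ((1 + t) * (1 + t + x)) =
      1 / (α * (1 - α) * (1 + x)) - (π / sin (π * α)) * Fhyp α x / (1 + x) := by
  obtain ⟨hα₀, hα₁⟩ := hα
  have : 0 < 1 - α := sub_pos.2 hα₁
  have hx₁ : 0 < 1 + x := by linarith
  have hC := pi_div_sin_pi_mul_pos hα₀ hα₁
  have hE := measurable_scaledFhyp α
  have hfin := genStieltjes_scaledFhyp_ne_top hα₀ hα₁ hx
  have hF : EqOn (fun t => Fhyp α t / ((1 + t) * (1 + t + x)))
      (fun t => (α * (π / sin (π * α)))⁻¹ * ((scaledFhyp α t).toReal * (1 + x + t) ^ (-1 : ℝ)))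
      (Ioi 0) :=
    fun t (ht : 0 < t) => Fhyp_div_mul_eq hα₀.ne' (by linarith) x
  refine ⟨(integrableOn_congr_fun hF measurableSet_Ioi).2
    ((integrableOn_toReal_mul_rpow_of_genStieltjes_ne_top hE hx₁.le hfin).const_mul _), ?_⟩
  rw [setIntegral_congr_fun measurableSet_Ioi hF, integral_const_mul,
    setIntegral_toReal_mul_rpow hE hx₁.le hfin, toReal_genStieltjes_scaledFhyp hα₀ hα₁ hx,
    Fhyp_eq_toReal_scaledFhyp hα₀.ne' hx]
  generalize π / sin (π * α) = C at hC
  field_simp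

theorem stieltjes_transform (α : ℝ) (hα : α ∈ Set.Ioo (0:ℝ) 1) (x : ℝ) (hx : 0 ≤ x) :
    IntegrableOn (fun t => Fhyp α t / ((1 + t) * (1 + t + x))) (Set.Ioi 0) ∧
    ∫ t in Set.Ioi (0:ℝ), Fhyp α t / ((1 + t) * (1 + t + x)) =
      1 / (α * (1 - α) * (1 + x)) - (π / Real.sin (π * α)) * Fhyp α x / (1 + x) :=
  stieltjes_transform_general hα (by linarith)
end

section
/- Let α ∈ (−1,1). If y : [0,∞) → ℝ is continuous on [0,∞), twice continuously differentiable on (0,∞), satisfies x(1+x)y''(x) + (2+4x)y'(x) + (2+α−α²)y(x) = 0 for all x > 0, and y(0) = 1, then y(x) = F_α(x)/(1+x) for all x ≥ 0. -/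
/-!
The factor `1 + x` turns the equation for `y` into the hypergeometric equation with parameters
`(α, 1 - α; 2)`, of which the Euler integral is a positive solution `A`, continuous at `0`: on the
level of integrands, its equation says that an exact derivative integrates to zero. In
Sturm–Liouville form `(p Y')' + q Y = 0` any second solution `Y` has a constant Wronskian
`K = p (Y' A - Y A')`, so `(Y / A)' = K / (p A²)`. As `1 / p` is not integrable at `0`, continuity
of `Y / A` forces `K = 0`, that is, `Y` is a multiple of `A`.
-/

open MeasureTheory Real Set

open ProbabilityTheory Topology

lemma hasDerivAt_integral_mul {a b x : ℝ} {s : Set ℝ} {g : ℝ → ℝ} {k k' : ℝ → ℝ → ℝ}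
    (hg : IntervalIntegrable g volume a b) (hs : IsCompact s) (hsx : s ∈ 𝓝 x)
    (hk : ∀ z ∈ s, ContinuousOn (k z) (uIcc a b))
    (hk' : ContinuousOn (fun w : ℝ × ℝ => k' w.1 w.2) (s ×ˢ uIcc a b))
    (hderiv : ∀ z ∈ s, ∀ u ∈ uIcc a b, HasDerivAt (fun z => k z u) (k' z u) z) :
    HasDerivAt (fun z => ∫ u in a..b, g u * k z u) (∫ u in a..b, g u * k' x u) x := by
  have hint : ∀ z ∈ s, IntervalIntegrable (fun u => g u * k z u) volume a b :=
    fun z hz => hg.mul_continuousOn (hk z hz)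
  have hint' : IntervalIntegrable (fun u => g u * k' x u) volume a b :=
    hg.mul_continuousOn <| hk'.comp (f := fun u => (x, u)) (by fun_prop)
      fun u hu => ⟨mem_of_mem_nhds hsx, hu⟩
  obtain ⟨C, hC⟩ := (hs.prod isCompact_uIcc).exists_bound_of_continuousOn hk'
  refine (intervalIntegral.hasDerivAt_integral_of_dominated_loc_of_deriv_le
    (F := fun z u => g u * k z u) (F' := fun z u => g u * k' z u) (bound := fun u => |g u| * C)
    hsx ?_ (hint x (mem_of_mem_nhds hsx)) hint'.def'.aestronglyMeasurable ?_
    (hg.abs.mul_const C) ?_).2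
  · filter_upwards [hsx] with z hz using (hint z hz).def'.aestronglyMeasurable
  · refine .of_forall fun u hu z hz => ?_
    rw [norm_mul, norm_eq_abs]
    gcongr
    exact hC (z, u) ⟨hz, uIoc_subset_uIcc hu⟩
  · exact .of_forall fun u hu z hz => (hderiv z hz u (uIoc_subset_uIcc hu)).const_mul (g u)

lemma eq_zero_of_hasDerivAt_const_mul_of_not_intervalIntegrable {a b K : ℝ} {f w : ℝ → ℝ}
    (hab : a ≤ b) (hf : ContinuousOn f (Icc a b))
    (hderiv : ∀ x ∈ Ioo a b, HasDerivAt f (K * w x) x) (hw : ∀ x ∈ Ioo a b, 0 ≤ w x)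
    (hint : ¬ IntervalIntegrable w volume a b) : K = 0 := by
  by_contra hK
  have hint_sq : IntervalIntegrable (fun x => K * (K * w x)) volume a b := by
    refine intervalIntegral.intervalIntegrable_deriv_of_nonneg (g := fun x => K * f x) ?_ ?_ ?_
      <;> simp only [uIcc_of_le hab, min_eq_left hab, max_eq_right hab]
    · exact continuousOn_const.mul hf
    · exact fun x hx => (hderiv x hx).const_mul K
    · intro x hx
      rw [← mul_assoc]
      exact mul_nonneg (mul_self_nonneg K) (hw x hx)
  refine hint ((hint_sq.const_mul (K⁻¹ * K⁻¹)).congr fun x _ => ?_)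
  field_simp

lemma not_intervalIntegrable_inv_rpow_mul {c r t : ℝ} (hc : 1 ≤ c) (ht : 0 < t) :
    ¬ IntervalIntegrable (fun x : ℝ => (x ^ c * (1 + x) ^ r)⁻¹) volume 0 t := by
  intro h
  have hcont : ContinuousOn (fun x : ℝ => (1 + x) ^ r) (uIcc 0 t) := by
    refine ContinuousOn.rpow_const (by fun_prop) fun x hx => Or.inl ?_
    rw [uIcc_of_le ht.le] at hx
    linarith [hx.1]
  have hrpow : IntervalIntegrable (fun x : ℝ => x ^ (-c)) volume 0 t := by
    refine (h.mul_continuousOn hcont).congr fun x hx => ?_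
    rw [uIoc_of_le ht.le] at hx
    have : (1 + x) ^ r ≠ 0 := (rpow_pos_of_pos (by linarith [hx.1]) r).ne'
    simp only [mul_inv, rpow_neg hx.1.le]
    field_simp
  rw [intervalIntegrable_iff_integrableOn_Ioo_of_le ht.le,
    intervalIntegral.integrableOn_Ioo_rpow_iff ht] at hrpow
  linarith

/-- The function `y` satisfies the Sturm–Liouville equation `(p y')' + q y = 0` on `s`. The
derivative is quantified existentially, so that nothing is assumed of `y` outside `s`. -/
def SolvesSturmLiouville (s : Set ℝ) (p q y : ℝ → ℝ) : Prop :=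
  ∃ y' : ℝ → ℝ, ∀ x ∈ s, HasDerivAt y (y' x) x ∧
    HasDerivAt (fun x => p x * y' x) (-(q x * y x)) x

namespace SolvesSturmLiouville

variable {s t : Set ℝ} {p q y A : ℝ → ℝ}

lemma mono (hy : SolvesSturmLiouville t p q y) (hst : s ⊆ t) : SolvesSturmLiouville s p q y :=
  let ⟨y', hy'⟩ := hy
  ⟨y', fun x hx => hy' x (hst hx)⟩

lemma exists_hasDerivAt_div (hs : IsOpen s) (hs' : IsPreconnected s)
    (hA : SolvesSturmLiouville s p q A) (hy : SolvesSturmLiouville s p q y)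
    (hp : ∀ x ∈ s, p x ≠ 0) (hA0 : ∀ x ∈ s, A x ≠ 0) :
    ∃ K, ∀ x ∈ s, HasDerivAt (fun x => y x / A x) (K * (p x * A x ^ 2)⁻¹) x := by
  obtain ⟨A', hA⟩ := hA
  obtain ⟨y', hy⟩ := hy
  have wronskian_deriv : ∀ x ∈ s,
      HasDerivAt (fun x => p x * y' x * A x - y x * (p x * A' x)) 0 x := by
    intro x hx
    convert! ((hy x hx).2.mul (hA x hx).1).sub ((hy x hx).1.mul (hA x hx).2) using 1
    ring
  obtain ⟨K, hK⟩ := hs.exists_is_const_of_deriv_eq_zero hs'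
    (fun x hx => (wronskian_deriv x hx).differentiableAt.differentiableWithinAt)
    (fun x hx => (wronskian_deriv x hx).deriv)
  refine ⟨K, fun x hx => ?_⟩
  convert! (hy x hx).1.div (hA x hx).1 (hA0 x hx) using 1
  have := hp x hx
  have := hA0 x hx
  rw [← hK x hx]
  field_simp

theorem div_eq_div {a b : ℝ} (hab : a ≤ b) (hA : SolvesSturmLiouville (Ioo a b) p q A)
    (hy : SolvesSturmLiouville (Ioo a b) p q y) (hp : ∀ x ∈ Ioo a b, 0 < p x)
    (hA_cont : ContinuousOn A (Icc a b)) (hA0 : ∀ x ∈ Icc a b, A x ≠ 0)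
    (hy_cont : ContinuousOn y (Icc a b))
    (hint : ¬ IntervalIntegrable (fun x => (p x)⁻¹) volume a b) :
    y b / A b = y a / A a := by
  obtain ⟨K, hderiv⟩ := exists_hasDerivAt_div isOpen_Ioo isPreconnected_Ioo hA hy
    (fun x hx => (hp x hx).ne') fun x hx => hA0 x (Ioo_subset_Icc_self hx)
  have hcont : ContinuousOn (fun x => y x / A x) (Icc a b) := hy_cont.div hA_cont hA0
  have hint' : ¬ IntervalIntegrable (fun x => (p x * A x ^ 2)⁻¹) volume a b := by
    rw [← uIcc_of_le hab] at hA_cont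
    refine fun h => hint ((h.mul_continuousOn (hA_cont.pow 2)).congr fun x hx => ?_)
    rw [uIoc_of_le hab] at hx
    have := hA0 x (Ioc_subset_Icc_self hx)
    simp only [mul_inv, Pi.pow_apply]
    field_simp
  obtain rfl : K = 0 := eq_zero_of_hasDerivAt_const_mul_of_not_intervalIntegrable hab hcont hderiv
    (fun x hx => inv_nonneg.2 (mul_nonneg (hp x hx).le (sq_nonneg _))) hint'
  have hconst := intervalIntegral.integral_eq_sub_of_hasDerivAt_of_le hab hcont hderiv (by simp)
  simp only [zero_mul, intervalIntegral.integral_zero] at hconst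
  exact sub_eq_zero.1 hconst.symm

end SolvesSturmLiouville

section EulerIntegral

variable {a b c x u : ℝ}

/-- The integrand of Euler's integral for `₂F₁(a, b; c; -x)`. -/
noncomputable def eulerIntegrand (a b c x u : ℝ) : ℝ :=
  u ^ (b - 1) * (1 - u) ^ (c - b - 1) * (1 + x * u) ^ (-a)

/-- Euler's integral for `₂F₁(a, b; c; -x)`, without the normalizing factor. -/
noncomputable def eulerIntegral (a b c x : ℝ) : ℝ :=
  ∫ u in (0 : ℝ)..1, eulerIntegrand a b c x u

/-- The Gauss hypergeometric function `₂F₁(a, b; c; -x)` for `0 < b < c` and `-1 < x`, as given by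
Euler's integral. -/
noncomputable def eulerHypergeometric (a b c x : ℝ) : ℝ :=
  eulerIntegral a b c x / beta b (c - b)

lemma one_add_mul_pos (hx : -1 < x) (hu : u ∈ Icc (0 : ℝ) 1) : 0 < 1 + x * u := by
  rcases hu.1.eq_or_lt with rfl | hu0
  · simp
  · nlinarith [hu.2]

lemma ofReal_rpow_mul_one_sub_rpow (hu : u ∈ Icc (0 : ℝ) 1) :
    ((u ^ (a - 1) * (1 - u) ^ (b - 1) : ℝ) : ℂ) =
      (u : ℂ) ^ ((a : ℂ) - 1) * (1 - (u : ℂ)) ^ ((b : ℂ) - 1) := by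
  push_cast [Complex.ofReal_cpow hu.1, Complex.ofReal_cpow (sub_nonneg.2 hu.2)]
  rfl

lemma intervalIntegrable_rpow_mul_one_sub_rpow (ha : 0 < a) (hb : 0 < b) :
    IntervalIntegrable (fun u : ℝ => u ^ (a - 1) * (1 - u) ^ (b - 1)) volume 0 1 := by
  have h := Complex.betaIntegral_convergent (u := a) (v := b) (by simpa) (by simpa)
  rw [intervalIntegrable_iff] at h ⊢
  refine IntegrableOn.congr_fun h.re (fun u hu => ?_) measurableSet_uIoc
  rw [uIoc_of_le zero_le_one] at hu
  rw [← ofReal_rpow_mul_one_sub_rpow (Ioc_subset_Icc_self hu)]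
  exact Complex.ofReal_re _

lemma integral_rpow_mul_one_sub_rpow (ha : 0 < a) (hb : 0 < b) :
    ∫ u in (0 : ℝ)..1, u ^ (a - 1) * (1 - u) ^ (b - 1) = beta a b := by
  rw [beta_eq_betaIntegralReal a b ha hb, Complex.betaIntegral,
    ← Complex.ofReal_re (∫ _ in _.._, _), ← intervalIntegral.integral_ofReal]
  refine congrArg Complex.re (intervalIntegral.integral_congr fun u hu => ?_)
  rw [uIcc_of_le zero_le_one] at hu
  exact ofReal_rpow_mul_one_sub_rpow hu

lemma eulerIntegral_zero_right (hb : 0 < b) (hbc : b < c) :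
    eulerIntegral a b c 0 = beta b (c - b) := by
  simp [eulerIntegral, eulerIntegrand, integral_rpow_mul_one_sub_rpow hb (sub_pos.2 hbc)]

lemma eulerIntegrand_pos (hx : -1 < x) (hu : u ∈ Ioo (0 : ℝ) 1) :
    0 < eulerIntegrand a b c x u :=
  mul_pos (mul_pos (rpow_pos_of_pos hu.1 _) (rpow_pos_of_pos (sub_pos.2 hu.2) _))
    (rpow_pos_of_pos (one_add_mul_pos hx (Ioo_subset_Icc_self hu)) _)

lemma intervalIntegrable_eulerIntegrand (hb : 0 < b) (hbc : b < c) (hx : -1 < x) :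
    IntervalIntegrable (eulerIntegrand a b c x) volume 0 1 := by
  refine (intervalIntegrable_rpow_mul_one_sub_rpow hb (sub_pos.2 hbc)).mul_continuousOn
    (ContinuousOn.rpow_const (by fun_prop) fun u hu => Or.inl ?_)
  rw [uIcc_of_le zero_le_one] at hu
  exact (one_add_mul_pos hx hu).ne'

lemma eulerIntegral_pos (hb : 0 < b) (hbc : b < c) (hx : -1 < x) : 0 < eulerIntegral a b c x :=
  intervalIntegral.intervalIntegral_pos_of_pos_on (intervalIntegrable_eulerIntegrand hb hbc hx)
    (fun _ hu => eulerIntegrand_pos hx hu) zero_lt_one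

lemma eulerIntegrand_add_one (hx : -1 < x) (hu : u ∈ Ioo (0 : ℝ) 1) :
    eulerIntegrand (a + 1) (b + 1) (c + 1) x u = eulerIntegrand a b c x u * (u / (1 + x * u)) := by
  have hxu := one_add_mul_pos hx (Ioo_subset_Icc_self hu)
  simp only [eulerIntegrand, add_sub_add_right_eq_sub, neg_add', rpow_sub_one hxu.ne']
  rw [show b + 1 - 1 = b - 1 + 1 by ring, rpow_add_one hu.1.ne']
  ring

lemma eulerIntegrand_add_one_right (hu : u ≠ 1) :
    eulerIntegrand a b (c + 1) x u = eulerIntegrand a b c x u * (1 - u) := by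
  rw [eulerIntegrand, show c + 1 - b - 1 = c - b - 1 + 1 by ring,
    rpow_add_one (sub_ne_zero.2 hu.symm), eulerIntegrand]
  ring

lemma eulerIntegrand_apply_zero (hb : b - 1 ≠ 0) : eulerIntegrand a b c x 0 = 0 := by
  simp [eulerIntegrand, zero_rpow hb]

lemma eulerIntegrand_apply_one (hbc : c - b - 1 ≠ 0) : eulerIntegrand a b c x 1 = 0 := by
  simp [eulerIntegrand, zero_rpow hbc]

lemma hasDerivAt_eulerIntegrand (hx : -1 < x) (hu : u ∈ Ioo (0 : ℝ) 1) :
    HasDerivAt (eulerIntegrand a b c x)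
      (eulerIntegrand a b c x u *
        ((b - 1) / u - (c - b - 1) / (1 - u) - a * x / (1 + x * u))) u := by
  have hu0 : u ≠ 0 := hu.1.ne'
  have hu1 : 1 - u ≠ 0 := (sub_pos.2 hu.2).ne'
  have hxu : 1 + x * u ≠ 0 := (one_add_mul_pos hx (Ioo_subset_Icc_self hu)).ne'
  have hd0 := (hasDerivAt_id u).rpow_const (p := b - 1) (Or.inl hu0)
  have hd1 := ((hasDerivAt_id u).const_sub 1).rpow_const (p := c - b - 1) (Or.inl hu1)
  have hd2 := (((hasDerivAt_id u).const_mul x).const_add 1).rpow_const (p := -a) (Or.inl hxu)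
  convert! (hd0.mul hd1).mul hd2 using 1
  simp only [eulerIntegrand, id, Pi.mul_apply, rpow_sub_one hu0, rpow_sub_one hu1,
    rpow_sub_one hxu]
  field_simp
  ring

lemma continuousOn_eulerIntegrand (hb : 1 ≤ b) (hbc : b + 1 ≤ c) (hx : -1 < x) :
    ContinuousOn (eulerIntegrand a b c x) (Icc 0 1) :=
  ((ContinuousOn.rpow_const (by fun_prop) fun _ _ => Or.inr (by linarith)).mul
    (ContinuousOn.rpow_const (by fun_prop) fun _ _ => Or.inr (by linarith))).mul
    (ContinuousOn.rpow_const (by fun_prop) fun _ hu => Or.inl (one_add_mul_pos hx hu).ne')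

lemma hasDerivAt_eulerIntegral (hb : 0 < b) (hbc : b < c) (hx : -1 < x) :
    HasDerivAt (eulerIntegral a b c) (-a * eulerIntegral (a + 1) (b + 1) (c + 1) x) x := by
  obtain ⟨l, hl, hlx⟩ := exists_between hx
  have hpos : ∀ z ∈ Icc l (x + 1), ∀ u ∈ uIcc (0 : ℝ) 1, 1 + z * u ≠ 0 := by
    intro z hz u hu
    rw [uIcc_of_le zero_le_one] at hu
    exact (one_add_mul_pos (hl.trans_le hz.1) hu).ne'
  have hderiv := hasDerivAt_integral_mul (k := fun z u => (1 + z * u) ^ (-a))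
    (k' := fun z u => u * -a * (1 + z * u) ^ (-a - 1))
    (intervalIntegrable_rpow_mul_one_sub_rpow hb (sub_pos.2 hbc)) isCompact_Icc
    (Icc_mem_nhds hlx (lt_add_one x))
    (fun z hz => ContinuousOn.rpow_const (by fun_prop) fun u hu => Or.inl (hpos z hz u hu))
    (ContinuousOn.mul (by fun_prop) <|
      ContinuousOn.rpow_const (by fun_prop) fun w hw => Or.inl (hpos w.1 hw.1 w.2 hw.2))
    (fun z hz u hu => by
      simpa using (((hasDerivAt_id z).mul_const u).const_add 1).rpow_const
        (p := -a) (Or.inl (hpos z hz u hu)))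
  convert! hderiv using 1
  rw [eulerIntegral, ← intervalIntegral.integral_const_mul]
  refine intervalIntegral.integral_congr_Ioo_of_le zero_le_one fun u hu => ?_
  have hxu := one_add_mul_pos hx (Ioo_subset_Icc_self hu)
  rw [eulerIntegrand_add_one hx hu]
  simp only [eulerIntegrand, rpow_sub_one hxu.ne']
  ring

lemma hasDerivAt_mul_eulerIntegrand (hx : -1 < x) (hu : u ∈ Ioo (0 : ℝ) 1) :
    HasDerivAt (fun u => a * eulerIntegrand (a + 1) (b + 1) (c + 1 + 1) x u)
      (x * (1 + x) * (a * (a + 1)) * eulerIntegrand (a + 1 + 1) (b + 1 + 1) (c + 1 + 1) x u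
        - (c + (a + b + 1) * x) * a * eulerIntegrand (a + 1) (b + 1) (c + 1) x u
        + a * b * eulerIntegrand a b c x u) u := by
  have hu0 : u ≠ 0 := hu.1.ne'
  have hu1 : 1 - u ≠ 0 := (sub_pos.2 hu.2).ne'
  have hxu : 1 + x * u ≠ 0 := (one_add_mul_pos hx (Ioo_subset_Icc_self hu)).ne'
  convert! (hasDerivAt_eulerIntegrand hx hu).const_mul a using 1
  simp only [eulerIntegrand_add_one hx hu]
  rw [eulerIntegrand_add_one_right hu.2.ne]
  field_simp
  ring

lemma eulerIntegral_contiguous (hb : 0 < b) (hbc : b < c) (hx : -1 < x) :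
    x * (1 + x) * (a * (a + 1)) * eulerIntegral (a + 1 + 1) (b + 1 + 1) (c + 1 + 1) x
      - (c + (a + b + 1) * x) * a * eulerIntegral (a + 1) (b + 1) (c + 1) x
      + a * b * eulerIntegral a b c x = 0 := by
  have hint₀ := (intervalIntegrable_eulerIntegrand (a := a) hb hbc hx).const_mul (a * b)
  have hint₁ := (intervalIntegrable_eulerIntegrand (a := a + 1) (b := b + 1) (c := c + 1)
    (by linarith) (by linarith) hx).const_mul ((c + (a + b + 1) * x) * a)
  have hint₂ := (intervalIntegrable_eulerIntegrand (a := a + 1 + 1) (b := b + 1 + 1)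
    (c := c + 1 + 1) (by linarith) (by linarith) hx).const_mul (x * (1 + x) * (a * (a + 1)))
  have hFTC := intervalIntegral.integral_eq_sub_of_hasDerivAt_of_le zero_le_one
    (continuousOn_const.mul (continuousOn_eulerIntegrand (by linarith) (by linarith) hx))
    (fun u hu => hasDerivAt_mul_eulerIntegrand (a := a) (b := b) (c := c) hx hu)
    ((hint₂.sub hint₁).add hint₀)
  rw [intervalIntegral.integral_add (hint₂.sub hint₁) hint₀,
    intervalIntegral.integral_sub hint₂ hint₁, intervalIntegral.integral_const_mul,
    intervalIntegral.integral_const_mul, intervalIntegral.integral_const_mul] at hFTC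
  rw [Pi.mul_apply, Pi.mul_apply, eulerIntegrand_apply_zero (by linarith),
    eulerIntegrand_apply_one (by linarith), sub_self] at hFTC
  exact hFTC

end EulerIntegral

section HypergeometricEquation

variable {a b c : ℝ} {y : ℝ → ℝ}

/-- The function `y` satisfies, on `(0, ∞)`, the equation of `₂F₁(a, b; c; -x)`. The substitution
of `-x` for the usual variable moves the singular point `1` to `-1`. -/
def SolvesHypergeometric (a b c : ℝ) (y : ℝ → ℝ) : Prop :=
  ∃ y' y'' : ℝ → ℝ, ∀ x > 0, HasDerivAt y (y' x) x ∧ HasDerivAt y' (y'' x) x ∧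
    x * (1 + x) * y'' x + (c + (a + b + 1) * x) * y' x + a * b * y x = 0

lemma solvesHypergeometric_eulerIntegral (hb : 0 < b) (hbc : b < c) :
    SolvesHypergeometric a b c (eulerIntegral a b c) := by
  refine ⟨fun x => -a * eulerIntegral (a + 1) (b + 1) (c + 1) x,
    fun x => -a * (-(a + 1) * eulerIntegral (a + 1 + 1) (b + 1 + 1) (c + 1 + 1) x),
    fun x hx => ⟨?_, ?_, ?_⟩⟩
  · exact hasDerivAt_eulerIntegral hb hbc (by linarith)
  · exact (hasDerivAt_eulerIntegral (by linarith) (by linarith) (by linarith)).const_mul (-a)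
  · linear_combination eulerIntegral_contiguous (a := a) hb hbc (neg_one_lt_zero.trans hx)

namespace SolvesHypergeometric

lemma of_contDiffOn (hy : ContDiffOn ℝ 2 y (Ioi 0))
    (hode : ∀ x > 0, x * (1 + x) * deriv (deriv y) x + (c + (a + b + 1) * x) * deriv y x
      + a * b * y x = 0) :
    SolvesHypergeometric a b c y := by
  have hy' : ContDiffOn ℝ 1 (deriv y) (Ioi 0) := hy.deriv_of_isOpen isOpen_Ioi (by norm_num)
  refine ⟨deriv y, deriv (deriv y), fun x hx => ⟨?_, ?_, hode x hx⟩⟩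
  · exact ((hy.differentiableOn two_ne_zero).differentiableAt (Ioi_mem_nhds hx)).hasDerivAt
  · exact ((hy'.differentiableOn one_ne_zero).differentiableAt (Ioi_mem_nhds hx)).hasDerivAt

lemma solvesSturmLiouville (hy : SolvesHypergeometric a b c y) :
    SolvesSturmLiouville (Ioi 0) (fun x => x ^ c * (1 + x) ^ (a + b + 1 - c))
      (fun x => a * b * (x ^ (c - 1) * (1 + x) ^ (a + b - c))) y := by
  obtain ⟨y', y'', hy⟩ := hy
  refine ⟨y', fun x hx => ?_⟩
  obtain ⟨hd, hd', hode⟩ := hy x hx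
  have hx0 : x ≠ 0 := ne_of_gt hx
  have hx1 : 1 + x ≠ 0 := (add_pos one_pos hx).ne'
  refine ⟨hd, ?_⟩
  convert! (((hasDerivAt_id x).rpow_const (p := c) (Or.inl hx0)).mul
    (((hasDerivAt_id x).const_add 1).rpow_const (p := a + b + 1 - c) (Or.inl hx1))).mul hd' using 1
  simp only [id, Pi.mul_apply, rpow_sub_one hx0, rpow_sub_one hx1,
    show a + b - c = a + b + 1 - c - 1 by ring]
  field_simp
  linear_combination -(x ^ c * (1 + x) ^ (a + b + 1 - c)) * hode

/-- Euler's transformation, with the singular point `1` at `-1`. -/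
lemma one_add_rpow_mul (hy : SolvesHypergeometric a b c y) :
    SolvesHypergeometric (c - a) (c - b) c (fun x => (1 + x) ^ (a + b - c) * y x) := by
  obtain ⟨y', y'', hy⟩ := hy
  refine ⟨fun x => (a + b - c) * (1 + x) ^ (a + b - c - 1) * y x + (1 + x) ^ (a + b - c) * y' x,
    fun x => (a + b - c) * ((a + b - c - 1) * (1 + x) ^ (a + b - c - 1 - 1)) * y x
      + 2 * ((a + b - c) * (1 + x) ^ (a + b - c - 1)) * y' x + (1 + x) ^ (a + b - c) * y'' x,
    fun x hx => ?_⟩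
  obtain ⟨hd, hd', hode⟩ := hy x hx
  have hx1 : 1 + x ≠ 0 := (add_pos one_pos hx).ne'
  have hpow (r : ℝ) : HasDerivAt (fun x : ℝ => (1 + x) ^ r) (r * (1 + x) ^ (r - 1)) x := by
    simpa using ((hasDerivAt_id x).const_add 1).rpow_const (p := r) (Or.inl hx1)
  refine ⟨(hpow _).mul hd, ?_, ?_⟩
  · convert! (((hpow (a + b - c - 1)).const_mul (a + b - c)).mul hd).add ((hpow _).mul hd') using 1
    ring
  · simp only [rpow_sub_one hx1]
    field_simp
    linear_combination (1 + x) * (1 + x) ^ (a + b - c) * hode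

theorem eq_mul_eulerHypergeometric (hb : 0 < b) (hbc : b < c) (hc : 1 ≤ c)
    (hy_cont : ContinuousOn y (Ici 0)) (hy : SolvesHypergeometric a b c y) {x : ℝ} (hx : 0 ≤ x) :
    y x = y 0 * eulerHypergeometric a b c x := by
  have hA_pos : ∀ t ∈ Icc 0 x, 0 < eulerIntegral a b c t := fun t ht =>
    eulerIntegral_pos hb hbc (by linarith [ht.1])
  have hdiv : y x / eulerIntegral a b c x = y 0 / eulerIntegral a b c 0 := by
    obtain rfl | hx' := hx.eq_or_lt
    · rfl
    exact SolvesSturmLiouville.div_eq_div hx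
      ((solvesHypergeometric_eulerIntegral hb hbc).solvesSturmLiouville.mono Ioo_subset_Ioi_self)
      (hy.solvesSturmLiouville.mono Ioo_subset_Ioi_self)
      (fun t ht => mul_pos (rpow_pos_of_pos ht.1 _) (rpow_pos_of_pos (by linarith [ht.1]) _))
      (fun t ht => (hasDerivAt_eulerIntegral hb hbc
        (by linarith [ht.1])).continuousAt.continuousWithinAt)
      (fun t ht => (hA_pos t ht).ne') (hy_cont.mono Icc_subset_Ici_self)
      (not_intervalIntegrable_inv_rpow_mul hc hx')
  rw [eulerIntegral_zero_right hb hbc, div_eq_iff (hA_pos x ⟨hx, le_rfl⟩).ne'] at hdiv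
  rw [hdiv, eulerHypergeometric]
  ring

end SolvesHypergeometric

lemma fhyp_eq_eulerHypergeometric (α x : ℝ) :
    Fhyp α x = eulerHypergeometric α (1 - α) 2 x := by
  rw [eulerHypergeometric, beta, eulerIntegral, Fhyp]
  simp only [eulerIntegrand, show (1 : ℝ) - α - 1 = -α by ring,
    show (2 : ℝ) - (1 - α) = 1 + α by ring, show (1 : ℝ) + α - 1 = α by ring,
    show (1 : ℝ) - α + (1 + α) = 2 by ring, Gamma_two]
  ring

theorem hypergeometric_ODE_uniqueness_general (hb : 0 < b) (hbc : b < c) (hc : 1 ≤ c)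
    (hy_cont : ContinuousOn y (Ici 0)) (hy : SolvesHypergeometric (c - a) (c - b) c y)
    {x : ℝ} (hx : 0 ≤ x) :
    y x = y 0 * (1 + x) ^ (a + b - c) * eulerHypergeometric a b c x := by
  have hcont : ContinuousOn (fun x => (1 + x) ^ (c - a + (c - b) - c) * y x) (Ici 0) :=
    (ContinuousOn.rpow_const (by fun_prop)
      fun t ht => Or.inl (add_pos_of_pos_of_nonneg one_pos ht).ne').mul hy_cont
  have hsol : SolvesHypergeometric a b c (fun x => (1 + x) ^ (c - a + (c - b) - c) * y x) := by
    simpa only [sub_sub_cancel] using hy.one_add_rpow_mul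
  have h := hsol.eq_mul_eulerHypergeometric hb hbc hc hcont hx
  have hx1 : 0 < 1 + x := by linarith
  rw [add_zero, one_rpow, one_mul, show c - a + (c - b) - c = -(a + b - c) by ring,
    rpow_neg hx1.le, inv_mul_eq_iff_eq_mul₀ (rpow_pos_of_pos hx1 _).ne'] at h
  rw [h]
  ring

end HypergeometricEquation

theorem hypergeometric_ODE_uniqueness (α : ℝ) (hα : α ∈ Set.Ioo (-1 : ℝ) 1)
    (y : ℝ → ℝ)
    (hycont : ContinuousOn y (Set.Ici 0))
    (hyC2 : ContDiffOn ℝ 2 y (Set.Ioi 0))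
    (hODE : ∀ x : ℝ, 0 < x →
      x * (1 + x) * deriv (deriv y) x + (2 + 4*x) * deriv y x
        + (2 + α - α^2) * y x = 0)
    (hy0 : y 0 = 1) :
    ∀ x : ℝ, 0 ≤ x → y x = Fhyp α x / (1 + x) := by
  intro x hx
  have hsol : SolvesHypergeometric (2 - α) (2 - (1 - α)) 2 y :=
    .of_contDiffOn hyC2 fun x hx => by linear_combination hODE x hx
  rw [hypergeometric_ODE_uniqueness_general (by linarith [hα.2]) (by linarith [hα.1]) one_le_two
    hycont hsol hx, hy0, fhyp_eq_eulerHypergeometric, add_sub_cancel, show (1 : ℝ) - 2 = -1 by ring,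
    rpow_neg_one, one_mul, inv_mul_eq_div]
end
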